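/- arXiv:1501.01652 — 4 statements merged into one kernel-verified Lean document; each statement's English description precedes it below -/
import Mathlib

section
/- Let q be a real number with 0 ≤ q < 1/2 and let K ≥ 1 be an integer. Then the series ∑_{s=K}^∞ (q/s)^s converges and satisfies ∑_{s=K}^∞ (q/s)^s ≤ 2.6·q^K. -/
/-- The tail series `∑_{s=K}^∞ (q/s)^s` converges and is bounded by `2.6 q^K`
for `0 ≤ q < 1/2`. -/
theorem tail_sum_q_div_s_pow_le (q : ℝ) (hq0 : 0 ≤ q) (hq1 : q < 1 / 2) (K : ℕ) (hK : 1 ≤ K) :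
    Summable (fun s : ℕ => (q / ((K : ℝ) + s)) ^ (K + s)) ∧
    ∑' s : ℕ, (q / ((K : ℝ) + s)) ^ (K + s) ≤ 2.6 * q ^ K := by
  have hb : ∀ s : ℕ, (q / ((K : ℝ) + s)) ^ (K + s) ≤ q ^ K * (1 / 2 : ℝ) ^ s := by
    intro s
    have hK1 : (1 : ℝ) ≤ K := by exact_mod_cast hK
    have hs : (0 : ℝ) ≤ s := Nat.cast_nonneg s
    have h1 : q / ((K : ℝ) + s) ≤ q := div_le_self hq0 (by linarith)
    have h0 : 0 ≤ q / ((K : ℝ) + s) := div_nonneg hq0 (by linarith)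
    calc (q / ((K : ℝ) + s)) ^ (K + s) ≤ q ^ (K + s) := pow_le_pow_left₀ h0 h1 _
      _ = q ^ K * q ^ s := pow_add _ _ _
      _ ≤ q ^ K * (1 / 2 : ℝ) ^ s :=
        mul_le_mul_of_nonneg_left (pow_le_pow_left₀ hq0 hq1.le _) (pow_nonneg hq0 _)
  have hg : HasSum (fun s : ℕ => q ^ K * (1 / 2 : ℝ) ^ s) (q ^ K * 2) :=
    hasSum_geometric_two.mul_left _
  have hS : Summable (fun s : ℕ => (q / ((K : ℝ) + s)) ^ (K + s)) :=
    Summable.of_nonneg_of_le (fun s => by positivity) hb hg.summable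
  refine ⟨hS, ?_⟩
  have h := hS.tsum_le_tsum hb hg.summable
  rw [hg.tsum_eq] at h
  have : 0 ≤ q ^ K := pow_nonneg hq0 _
  linarith
end

section
/- Let N ≥ 1 be an integer and let j_1, …, j_{N+1} be real numbers such that for every 1 ≤ n ≤ N+1 one can write j_n = (n − 1/4)·π + b_n with 0 ≤ b_n ≤ 1/(8·(n − 1/4)·π). Then for every 1 ≤ k ≤ N, |j_k/j_{N+1} − (k − 1/4)/(N + 3/4)| ≤ 1/(8·(N + 3/4)·(k − 1/4)·π²). -/
/-- Ratios of perturbed equally-spaced points (such as the positive roots of `J_0`)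
form a small perturbation of the equally-spaced grid `(k - 1/4)/(N + 3/4)`. -/
theorem bessel_root_ratio_perturbation (N : ℕ) (hN : 1 ≤ N) (j : ℕ → ℝ)
    (hj : ∀ n : ℕ, 1 ≤ n → n ≤ N + 1 → ∃ b : ℝ,
      j n = ((n : ℝ) - 1 / 4) * Real.pi + b ∧ 0 ≤ b ∧
        b ≤ 1 / (8 * ((n : ℝ) - 1 / 4) * Real.pi)) :
    ∀ k : ℕ, 1 ≤ k → k ≤ N →
      |j k / j (N + 1) - ((k : ℝ) - 1 / 4) / ((N : ℝ) + 3 / 4)| ≤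
        1 / (8 * ((N : ℝ) + 3 / 4) * ((k : ℝ) - 1 / 4) * Real.pi ^ 2) := by
  intro k hk hkN
  obtain ⟨b, hjb, hb0, hb⟩ := hj k hk (by omega)
  obtain ⟨c, hjc, hc0, hc⟩ := hj (N + 1) (by omega) le_rfl
  have e : (((N + 1 : ℕ) : ℝ) - 1 / 4) = (N : ℝ) + 3 / 4 := by push_cast; ring
  rw [e] at hjc hc
  have hk' : (1 : ℝ) ≤ k := by exact_mod_cast hk
  have hkN' : (k : ℝ) ≤ N := by exact_mod_cast hkN
  rw [hjb, hjc]
  have hp := Real.pi_pos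
  generalize Real.pi = p at *
  obtain ⟨x, hx⟩ : ∃ x : ℝ, x = (k : ℝ) - 1 / 4 := ⟨_, rfl⟩
  obtain ⟨y, hy⟩ : ∃ y : ℝ, y = (N : ℝ) + 3 / 4 := ⟨_, rfl⟩
  rw [← hx] at hb ⊢
  rw [← hy] at hc ⊢
  have hx0 : 0 < x := by linarith
  have hxy : x ≤ y := by linarith
  have hy0 : 0 < y := by linarith
  have hd : 0 < y * p + c := by positivity
  have e1 : (x * p + b) / (y * p + c) - x / y = (y * b - x * c) / (y * (y * p + c)) := by
    field_simp
    ring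
  have h1 : y * b ≤ y * (1 / (8 * x * p)) := mul_le_mul_of_nonneg_left hb hy0.le
  have h2 : x * c ≤ y * (1 / (8 * x * p)) := by
    have h3 : 1 / (8 * y * p) ≤ 1 / (8 * x * p) := by gcongr
    exact mul_le_mul hxy (hc.trans h3) hc0 hy0.le
  have h3 : 0 ≤ y * b := by positivity
  have h4 : 0 ≤ x * c := by positivity
  have h5 : |y * b - x * c| ≤ y * (1 / (8 * x * p)) := by
    rw [abs_le]
    constructor <;> linarith
  rw [e1, abs_div, abs_of_pos (show 0 < y * (y * p + c) by positivity)]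
  calc |y * b - x * c| / (y * (y * p + c))
      ≤ (y * (1 / (8 * x * p))) / (y * (y * p)) := by
        apply div_le_div₀ (by positivity) h5 (by positivity)
        exact mul_le_mul_of_nonneg_left (by linarith) hy0.le
    _ = 1 / (8 * y * x * p ^ 2) := by
        field_simp
end

section
/- Let ν be an integer and let u, v, w be real numbers. Then J_ν(u·(v + w)) = ∑_{s∈ℤ} ∑_{t=0}^∞ ((−1)^t · 2^(−2t−s) / (t! · Γ(t+s+1))) · J_{ν−s}(u·v) · (u·w)^(2t+s), where 1/Γ(m+1) is interpreted as 0 when m is a negative integer (so all terms with t + s < 0 vanish, and every surviving exponent 2t + s is a nonnegative integer), and the double series converges absolutely. Consequently, for column vectors u, v, w ∈ ℝ^N, the N×N matrix with (k,n) entry J_ν(u_k·(v_n + w_n)) equals ∑_{s∈ℤ} ∑_{t=0}^∞ ((−1)^t 2^(−2t−s)/(t!·Γ(t+s+1))) · D_u^(2t+s) · A_{ν−s} · D_w^(2t+s), where A_m is the matrix with (k,n) entry J_m(u_k v_n) and D_u, D_w are the diagonal matrices with diagonals u, w. -/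
/-- Bessel function of the first kind of nonnegative integer order, defined by its
everywhere absolutely convergent power series. -/
noncomputable def besselJNat (n : ℕ) (z : ℝ) : ℝ :=
  ∑' t : ℕ, ((-1 : ℝ) ^ t / ((t.factorial : ℝ) * ((t + n).factorial : ℝ))) * (z / 2) ^ (2 * t + n)

/-- Bessel function of the first kind of integer order, with `J_{-n} = (-1)^n J_n`. -/
noncomputable def besselJ (n : ℤ) (z : ℝ) : ℝ :=
  if 0 ≤ n then besselJNat n.toNat z else (-1 : ℝ) ^ (-n).toNat * besselJNat (-n).toNat z

/-- The coefficient `(-1)^t 2^(-2t-s) / (t! Γ(t+s+1))`; since `1/Γ` vanishes at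
nonpositive integers (and division by zero is zero in Lean), terms with `t + s < 0` vanish. -/
noncomputable def neumannTaylorCoeff (t : ℕ) (s : ℤ) : ℝ :=
  (-1 : ℝ) ^ t * (2 : ℝ) ^ (-(2 * (t : ℤ)) - s) /
    ((t.factorial : ℝ) * Real.Gamma (((t : ℤ) + s + 1 : ℤ) : ℝ))

/-- exponential series term -/
noncomputable def bntE (x : ℝ) (n : ℕ) : ℝ := x ^ n / (n.factorial : ℝ)

lemma bntE_norm_summable (x : ℝ) : Summable (fun n => ‖bntE x n‖) :=
  (Real.summable_pow_div_factorial x).norm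

lemma bntE_add (x y : ℝ) (n : ℕ) :
    bntE (x + y) n = ∑ p ∈ Finset.HasAntidiagonal.antidiagonal n, bntE x p.1 * bntE y p.2 := by
  unfold bntE
  rw [(Commute.all x y).add_pow', Finset.sum_div]
  refine Finset.sum_congr rfl fun p hp => ?_
  obtain ⟨a, b⟩ := p
  have h : a + b = n := by simpa using hp
  subst h
  have h2 : (((a + b).choose a : ℕ) : ℝ) * a.factorial * b.factorial = (a + b).factorial := by
    rw [Nat.choose_symm_add]
    exact_mod_cast Nat.add_choose_mul_factorial_mul_factorial a b
  have ha : (a.factorial : ℝ) ≠ 0 := by positivity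
  have hb : (b.factorial : ℝ) ≠ 0 := by positivity
  have hab : ((a + b).factorial : ℝ) ≠ 0 := by positivity
  simp only [nsmul_eq_mul]
  field_simp
  linear_combination (x ^ a * y ^ b) * h2

/-- Laurent coefficient form of the Bessel function. -/
lemma bnt_besselJ (n : ℤ) (x : ℝ) :
    besselJ n (2 * x) =
      ∑' p : ℕ × ℕ, if (p.1 : ℤ) - p.2 = n then bntE x p.1 * bntE (-x) p.2 else 0 := by
  unfold besselJ
  split_ifs with hn
  · obtain ⟨m, rfl⟩ := Int.eq_ofNat_of_zero_le hn
    have hinj : Function.Injective (fun t : ℕ => (t + m, t)) := by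
      intro a b h
      simpa using congrArg Prod.snd h
    rw [← hinj.tsum_eq]
    · unfold besselJNat
      refine tsum_congr fun t => ?_
      simp only [Int.toNat_natCast]
      rw [if_pos (by push_cast; ring)]
      unfold bntE
      rw [mul_div_cancel_left₀ _ (two_ne_zero), neg_pow x t]
      field_simp
      ring
    · rintro ⟨a, b⟩ h
      have : (a : ℤ) - b = m := by
        by_contra h'
        simp [h'] at h
      refine ⟨b, ?_⟩
      ext <;> simp
      omega
  · obtain ⟨m, rfl⟩ : ∃ m : ℕ, n = -(m : ℤ) := ⟨(-n).toNat, by omega⟩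
    have hinj : Function.Injective (fun t : ℕ => (t, t + m)) := by
      intro a b h
      simpa using congrArg Prod.fst h
    rw [← hinj.tsum_eq]
    · unfold besselJNat
      rw [← tsum_mul_left]
      refine tsum_congr fun t => ?_
      simp only [Int.toNat_natCast, neg_neg]
      rw [if_pos (by push_cast; ring)]
      unfold bntE
      rw [mul_div_cancel_left₀ _ (two_ne_zero), neg_pow x (t + m)]
      field_simp
      ring
    · rintro ⟨a, b⟩ h
      have : (a : ℤ) - b = -m := by
        by_contra h'
        simp [h'] at h
      refine ⟨a, ?_⟩
      ext <;> simp
      omega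

/-- the quadruple series; first pair is the `y` part -/
noncomputable def bntG (n : ℤ) (x y : ℝ) (r : (ℕ × ℕ) × (ℕ × ℕ)) : ℝ :=
  if ((r.1.1 + r.2.1 : ℕ) : ℤ) - ((r.1.2 + r.2.2 : ℕ) : ℤ) = n then
    (bntE y r.1.1 * bntE (-y) r.1.2) * (bntE x r.2.1 * bntE (-x) r.2.2) else 0

lemma bntG_summable (n : ℤ) (x y : ℝ) : Summable (bntG n x y) := by
  have h1 := (bntE_norm_summable y).mul_norm (bntE_norm_summable (-y))
  have h2 := (bntE_norm_summable x).mul_norm (bntE_norm_summable (-x))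
  refine Summable.of_norm_bounded (h1.mul_norm h2) fun r => ?_
  unfold bntG
  split_ifs
  · exact le_rfl
  · rw [norm_zero]; exact norm_nonneg _

lemma bntG_inner (n : ℤ) (x y : ℝ) (q : ℕ × ℕ) :
    ∑' p, bntG n x y (q, p) =
      bntE y q.1 * bntE (-y) q.2 * besselJ (n - ((q.1 : ℤ) - q.2)) (2 * x) := by
  rw [bnt_besselJ, ← tsum_mul_left]
  refine tsum_congr fun p => ?_
  unfold bntG
  by_cases h : (p.1 : ℤ) - p.2 = n - ((q.1 : ℤ) - q.2)
  · rw [if_pos h, if_pos (by push_cast; linarith)]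
  · rw [if_neg h, if_neg (by push_cast; intro h'; apply h; linarith), mul_zero]

lemma bntG_tsum (n : ℤ) (x y : ℝ) : ∑' r, bntG n x y r = besselJ n (2 * (x + y)) := by
  have hs := (Equiv.summable_iff (Equiv.prodProdProdComm ℕ ℕ ℕ ℕ)).2 (bntG_summable n x y)
  rw [← (Equiv.prodProdProdComm ℕ ℕ ℕ ℕ).tsum_eq]
  have := (hs.hasSum.tsum_fiberwise
    (fun r : (ℕ × ℕ) × (ℕ × ℕ) => (r.1.1 + r.1.2, r.2.1 + r.2.2))).tsum_eq
  simp only [Function.comp_def] at this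
  rw [← this, bnt_besselJ]
  refine tsum_congr fun c => ?_
  obtain ⟨a, b⟩ := c
  have hset : ((fun r : (ℕ × ℕ) × (ℕ × ℕ) => (r.1.1 + r.1.2, r.2.1 + r.2.2)) ⁻¹' {(a, b)}) =
      ↑(Finset.HasAntidiagonal.antidiagonal a ×ˢ Finset.HasAntidiagonal.antidiagonal b) := by
    ext r
    simp [Prod.ext_iff]
  rw [hset, Finset.tsum_subtype' _
    (fun r => bntG n x y (Equiv.prodProdProdComm ℕ ℕ ℕ ℕ r)), add_comm x y, neg_add,
    bntE_add, bntE_add, Finset.sum_mul_sum, ← Finset.sum_product']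
  have hG : ∀ r ∈ Finset.HasAntidiagonal.antidiagonal a ×ˢ Finset.HasAntidiagonal.antidiagonal b,
      bntG n x y (Equiv.prodProdProdComm ℕ ℕ ℕ ℕ r) =
      if (a : ℤ) - b = n then
        bntE y r.1.1 * bntE x r.1.2 * (bntE (-y) r.2.1 * bntE (-x) r.2.2) else 0 := by
    rintro ⟨⟨a1, a2⟩, ⟨b1, b2⟩⟩ hr
    simp only [Finset.mem_product, Finset.HasAntidiagonal.mem_antidiagonal] at hr
    obtain ⟨rfl, rfl⟩ := hr
    simp only [bntG, Equiv.prodProdProdComm_apply]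
    split_ifs
    · ring
    · rfl
  rw [Finset.sum_congr rfl hG]
  split_ifs <;> simp

lemma bnt_coeff (a b : ℕ) (z : ℝ) :
    neumannTaylorCoeff b ((a : ℤ) - b) * (2 * z) ^ (2 * (b : ℤ) + ((a : ℤ) - b)) =
      bntE z a * bntE (-z) b := by
  unfold neumannTaylorCoeff bntE
  have e1 : 2 * (b : ℤ) + ((a : ℤ) - b) = ((a + b : ℕ) : ℤ) := by push_cast; ring
  have e2 : -(2 * (b : ℤ)) - ((a : ℤ) - b) = -((a + b : ℕ) : ℤ) := by push_cast; ring
  have e3 : (((b : ℤ) + ((a : ℤ) - b) + 1 : ℤ) : ℝ) = (a : ℝ) + 1 := by push_cast; ring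
  rw [e1, e2, e3, Real.Gamma_nat_eq_factorial, zpow_neg, zpow_natCast, zpow_natCast, neg_pow z b,
    mul_pow]
  field_simp
  ring

lemma bnt_coeff_zero (t : ℕ) (s : ℤ) (h : (t : ℤ) + s < 0) : neumannTaylorCoeff t s = 0 := by
  unfold neumannTaylorCoeff
  obtain ⟨m, hm⟩ : ∃ m : ℕ, (t : ℤ) + s + 1 = -(m : ℤ) := ⟨(-((t : ℤ) + s + 1)).toNat, by omega⟩
  rw [hm]
  push_cast
  rw [Real.Gamma_neg_nat_eq_zero]
  simp

/-- scalar summand -/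
noncomputable def bntT (ν : ℤ) (z c : ℝ) (p : ℤ × ℕ) : ℝ :=
  neumannTaylorCoeff p.2 p.1 * besselJ (ν - p.1) z * c ^ (2 * (p.2 : ℤ) + p.1)

lemma bntT_main (ν : ℤ) (z c : ℝ) :
    Summable (bntT ν z c) ∧ besselJ ν (z + c) = ∑' p, bntT ν z c p := by
  obtain ⟨x, rfl⟩ : ∃ x, z = 2 * x := ⟨z / 2, by ring⟩
  obtain ⟨y, rfl⟩ : ∃ y, c = 2 * y := ⟨c / 2, by ring⟩
  have hinj : Function.Injective (fun q : ℕ × ℕ => (((q.1 : ℤ) - q.2, q.2) : ℤ × ℕ)) := by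
    rintro ⟨a, b⟩ ⟨a', b'⟩ h
    simp only [Prod.mk.injEq] at h ⊢
    omega
  have hz : ∀ p ∉ Set.range (fun q : ℕ × ℕ => (((q.1 : ℤ) - q.2, q.2) : ℤ × ℕ)),
      bntT ν (2 * x) (2 * y) p = 0 := by
    rintro ⟨s, t⟩ hp
    have : (t : ℤ) + s < 0 := by
      by_contra h'
      refine hp ⟨(((t : ℤ) + s).toNat, t), ?_⟩
      simp only [Prod.mk.injEq, and_true]
      omega
    simp [bntT, bnt_coeff_zero t s this]
  have hterm : ∀ q : ℕ × ℕ, bntT ν (2 * x) (2 * y) ((q.1 : ℤ) - q.2, q.2) =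
      ∑' p, bntG ν x y (q, p) := by
    intro q
    rw [bntG_inner, ← bnt_coeff]
    simp only [bntT]
    ring
  constructor
  · rw [← hinj.summable_iff hz]
    exact (bntG_summable ν x y).prod.congr fun q => (hterm q).symm
  · rw [← hinj.tsum_eq (Function.support_subset_iff'.2 hz), ← mul_add, ← bntG_tsum,
      (bntG_summable ν x y).tsum_prod]
    exact tsum_congr fun q => (hterm q).symm

/-- Combination of the Neumann addition formula with the Taylor expansion of `J_s`:
scalar identity with absolute convergence, and the resulting matrix decomposition. -/
theorem bessel_neumann_taylor_decomposition (ν : ℤ) :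
    (∀ u v w : ℝ,
      Summable (fun p : ℤ × ℕ =>
        |neumannTaylorCoeff p.2 p.1 * besselJ (ν - p.1) (u * v) *
          (u * w) ^ (2 * (p.2 : ℤ) + p.1)|) ∧
      besselJ ν (u * (v + w)) =
        ∑' s : ℤ, ∑' t : ℕ,
          neumannTaylorCoeff t s * besselJ (ν - s) (u * v) * (u * w) ^ (2 * (t : ℤ) + s)) ∧
    (∀ N : ℕ, ∀ u v w : Fin N → ℝ,
      (Matrix.of fun k n : Fin N => besselJ ν (u k * (v n + w n))) =
        ∑' s : ℤ, ∑' t : ℕ,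
          neumannTaylorCoeff t s •
            (Matrix.diagonal (fun k => u k ^ (2 * (t : ℤ) + s)) *
              (Matrix.of fun k n : Fin N => besselJ (ν - s) (u k * v n)) *
              Matrix.diagonal (fun k => w k ^ (2 * (t : ℤ) + s)))) := by
  have scal : ∀ u v w : ℝ, Summable (bntT ν (u * v) (u * w)) ∧
      besselJ ν (u * (v + w)) = ∑' s : ℤ, ∑' t : ℕ, bntT ν (u * v) (u * w) (s, t) := by
    intro u v w
    obtain ⟨h1, h2⟩ := bntT_main ν (u * v) (u * w)
    exact ⟨h1, by rw [mul_add, h2, h1.tsum_prod]⟩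
  refine ⟨fun u v w => ⟨(scal u v w).1.abs, (scal u v w).2⟩, fun N u v w => ?_⟩
  have hentry : ∀ (s : ℤ) (t : ℕ), neumannTaylorCoeff t s •
      (Matrix.diagonal (fun k => u k ^ (2 * (t : ℤ) + s)) *
        (Matrix.of fun k n : Fin N => besselJ (ν - s) (u k * v n)) *
        Matrix.diagonal (fun k => w k ^ (2 * (t : ℤ) + s))) =
      Matrix.of fun k n : Fin N => bntT ν (u k * v n) (u k * w n) (s, t) := by
    intro s t
    ext k n
    simp only [Matrix.smul_apply, Matrix.mul_diagonal, Matrix.diagonal_mul, Matrix.of_apply,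
      smul_eq_mul, bntT, mul_zpow]
    ring
  simp only [hentry]
  have hin : ∀ (s : ℤ), ∑' t : ℕ,
      (Matrix.of fun k n : Fin N => bntT ν (u k * v n) (u k * w n) (s, t)) =
      Matrix.of fun k n : Fin N => ∑' t : ℕ, bntT ν (u k * v n) (u k * w n) (s, t) := by
    intro s
    have h0 : ∀ k n, Summable fun t : ℕ => bntT ν (u k * v n) (u k * w n) (s, t) :=
      fun k n => (scal (u k) (v n) (w n)).1.prod_factor s
    refine HasSum.tsum_eq ?_
    exact Pi.hasSum.2 fun k => Pi.hasSum.2 fun n => (h0 k n).hasSum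
  simp only [hin]
  refine (HasSum.tsum_eq ?_).symm
  refine Pi.hasSum.2 fun k => Pi.hasSum.2 fun n => ?_
  have := (scal (u k) (v n) (w n)).1.prod.hasSum
  rw [← (scal (u k) (v n) (w n)).2] at this
  exact this
end

section
/- Let N ≥ 1 be an integer and let j_1, …, j_{N+1} be real numbers such that for every 1 ≤ n ≤ N+1 one can write j_n = (n − 1/4)·π + b_n with 0 ≤ b_n ≤ 1/(8·(n − 1/4)·π). For 1 ≤ k ≤ N define e_{k,N} = j_k/j_{N+1} − (k − 1/4)/(N + 3/4). Then for all 1 ≤ k, n ≤ N, |e_{k,N}| · j_n ≤ 1.01/(8·(k − 1/4)·π). -/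
/-- Bound on the perturbation arguments `|e_{k,N}| · j_n` arising in the matrix
decomposition used for the discrete Hankel transform. -/
theorem perturbation_times_root_bound (N : ℕ) (hN : 1 ≤ N) (j : ℕ → ℝ)
    (hj : ∀ n : ℕ, 1 ≤ n → n ≤ N + 1 → ∃ b : ℝ,
      j n = ((n : ℝ) - 1 / 4) * Real.pi + b ∧ 0 ≤ b ∧
        b ≤ 1 / (8 * ((n : ℝ) - 1 / 4) * Real.pi)) :
    ∀ k n : ℕ, 1 ≤ k → k ≤ N → 1 ≤ n → n ≤ N →
      |j k / j (N + 1) - ((k : ℝ) - 1 / 4) / ((N : ℝ) + 3 / 4)| * j n ≤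
        1.01 / (8 * ((k : ℝ) - 1 / 4) * Real.pi) := by
  intro k n hk hkN hn hnN
  obtain ⟨b, hjk, hb0, hb⟩ := hj k hk (by omega)
  obtain ⟨B, hjN, hB0, hB⟩ := hj (N + 1) (by omega) le_rfl
  obtain ⟨d, hjn, hd0, hd⟩ := hj n hn (by omega)
  have hpi := Real.pi_gt_three
  have hk' : (1 : ℝ) ≤ k := by exact_mod_cast hk
  have hn' : (1 : ℝ) ≤ n := by exact_mod_cast hn
  have hkN' : (k : ℝ) ≤ N := by exact_mod_cast hkN
  have hnN' : (n : ℝ) ≤ N := by exact_mod_cast hnN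
  push_cast at hjN hB
  have hM : (N : ℝ) + 1 - 1 / 4 = N + 3 / 4 := by ring
  rw [hM] at hjN hB
  obtain ⟨K, hK⟩ : ∃ K : ℝ, K = (k : ℝ) - 1 / 4 := ⟨_, rfl⟩
  obtain ⟨M, hMd⟩ : ∃ M : ℝ, M = (N : ℝ) + 3 / 4 := ⟨_, rfl⟩
  rw [← hK] at hjk hb ⊢
  rw [← hMd] at hjN hB ⊢
  have hK0 : 0 < K := by linarith
  have hKM : K ≤ M := by linarith
  have hM0 : 0 < M := by linarith
  obtain ⟨c, hc⟩ : ∃ c : ℝ, c = 1 / (8 * K * Real.pi) := ⟨_, rfl⟩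
  have hc0 : 0 < c := by rw [hc]; positivity
  have hBc : B ≤ c := by
    refine hB.trans ?_
    rw [hc]
    gcongr
  rw [← hc] at hb
  have hd1 : d ≤ 1 := by
    refine hd.trans ?_
    rw [div_le_one (by apply mul_pos <;> linarith)]
    nlinarith
  have hJ0 : 0 < j (N + 1) := by rw [hjN]; positivity
  have hjn0 : 0 ≤ j n := by
    rw [hjn]
    have : 0 ≤ ((n : ℝ) - 1 / 4) * Real.pi := mul_nonneg (by linarith) (by linarith)
    linarith
  have hjJ : j n ≤ j (N + 1) := by
    rw [hjn, hjN]
    have : ((n : ℝ) - 1 / 4) * Real.pi ≤ (M - 1) * Real.pi :=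
      mul_le_mul_of_nonneg_right (by linarith) (by linarith)
    linarith
  have he : |j k / j (N + 1) - K / M| ≤ c / j (N + 1) := by
    have h1 : j k / j (N + 1) - K / M = ((b * M - K * B) / M) / j (N + 1) := by
      have h2 : j k * M - K * j (N + 1) = b * M - K * B := by rw [hjk, hjN]; ring
      rw [← h2]
      field_simp
    rw [h1, abs_div, abs_of_pos hJ0, abs_div, abs_of_pos hM0]
    gcongr
    rw [div_le_iff₀ hM0]
    have h3 : b * M ≤ c * M := mul_le_mul_of_nonneg_right hb hM0.le
    have h4 : K * B ≤ M * c := mul_le_mul hKM hBc hB0 hM0.le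
    have h5 : 0 ≤ b * M := by positivity
    have h6 : 0 ≤ K * B := by positivity
    rw [abs_le]
    constructor <;> linarith
  calc |j k / j (N + 1) - K / M| * j n ≤ c / j (N + 1) * j (N + 1) := by gcongr
    _ = c := by field_simp
    _ ≤ 1.01 / (8 * K * Real.pi) := by
      rw [hc]
      gcongr
      norm_num
end
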